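/- Let H be a 2-vertex-connected undirected graph with a DFS tree T rooted at r, let c be a vertex different from r, and let u be a vertex with u ≠ r. (i) If {p(c),(u,p(u))} is a vertex-edge cut-pair of H such that u is a descendant of c and high(u) is a proper ancestor of p(c), then M(u) = M_p(c). (ii) Conversely, if u is a proper descendant of c, M(u) = M_p(c), and high(u) is a proper ancestor of p(c), then {p(c),(u,p(u))} is a vertex-edge cut-pair of H. -/

import Mathlib

/-- A DFS tree of the graph `H`, rooted at `r`, given by a parent function:
it is a spanning tree (every vertex reaches the root by iterating the parent
function, and each non-root vertex is adjacent to its parent), and every edge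
of `H` joins a vertex to one of its ancestors. -/
structure DFSTree {V : Type*} (H : SimpleGraph V) (r : V) where
  par : V → V
  par_root : par r = r
  reaches_root : ∀ v : V, ∃ n : ℕ, par^[n] v = r
  par_adj : ∀ v : V, v ≠ r → H.Adj v (par v)
  edge_anc : ∀ x y : V, H.Adj x y → (∃ n : ℕ, par^[n] x = y) ∨ (∃ n : ℕ, par^[n] y = x)

namespace DFSTree

variable {V : Type*} {H : SimpleGraph V} {r : V} (T : DFSTree H r)

/-- `a` is an ancestor of `b` (every vertex is an ancestor of itself). -/
def Anc (a b : V) : Prop := ∃ n : ℕ, T.par^[n] b = a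

/-- `a` is a proper ancestor of `b`. -/
def PAnc (a b : V) : Prop := T.Anc a b ∧ a ≠ b

/-- `(x,y)` is a back-edge: an edge of `H` from `x` to an ancestor `y` of `x`
which is not the tree edge from `x` to its parent. -/
def BackEdge (x y : V) : Prop := H.Adj x y ∧ T.Anc y x ∧ T.par x ≠ y

/-- The set of descendants of `v` joined by a back-edge to a proper ancestor of `v`. -/
def MSet (v : V) : Set V := {x | T.Anc v x ∧ ∃ y, T.PAnc y v ∧ T.BackEdge x y}

/-- `m = M(v)`: `m` is the nearest common ancestor of all descendants of `v`
joined by a back-edge to a proper ancestor of `v`. -/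
def IsM (v m : V) : Prop :=
  (∀ x ∈ T.MSet v, T.Anc m x) ∧ ∀ m' : V, (∀ x ∈ T.MSet v, T.Anc m' x) → T.Anc m' m

/-- The set of descendants of `v` joined by a back-edge to a proper ancestor of `p(v)`. -/
def MpSet (v : V) : Set V := {x | T.Anc v x ∧ ∃ y, T.PAnc y (T.par v) ∧ T.BackEdge x y}

/-- `m = M_p(v)`: `m` is the nearest common ancestor of all descendants of `v`
joined by a back-edge to a proper ancestor of `p(v)`. -/
def IsMp (v m : V) : Prop :=
  (∀ x ∈ T.MpSet v, T.Anc m x) ∧ ∀ m' : V, (∀ x ∈ T.MpSet v, T.Anc m' x) → T.Anc m' m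

/-- `h = high(v)`: `h` is the deepest proper ancestor of `v` joined by a
back-edge to a descendant of `v`. -/
def IsHigh (v h : V) : Prop :=
  T.PAnc h v ∧ (∃ x, T.Anc v x ∧ T.BackEdge x h) ∧
    ∀ h' : V, T.PAnc h' v → (∃ x, T.Anc v x ∧ T.BackEdge x h') → T.Anc h' h

/-- `h = high_p(v)`: `h` is the deepest proper ancestor of `p(v)` joined by a
back-edge to a descendant of `v`. -/
def IsHighP (v h : V) : Prop :=
  T.PAnc h (T.par v) ∧ (∃ x, T.Anc v x ∧ T.BackEdge x h) ∧
    ∀ h' : V, T.PAnc h' (T.par v) → (∃ x, T.Anc v x ∧ T.BackEdge x h') → T.Anc h' h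

/-- `l = low(v)`: `l` is the proper ancestor of `v` nearest to the root joined
by a back-edge to a descendant of `v`. -/
def IsLow (v l : V) : Prop :=
  T.PAnc l v ∧ (∃ x, T.Anc v x ∧ T.BackEdge x l) ∧
    ∀ l' : V, T.PAnc l' v → (∃ x, T.Anc v x ∧ T.BackEdge x l') → T.Anc l l'

end DFSTree

/-- `{v, e}` is a vertex-edge cut-pair of `H`: `e` is an edge of `H` and deleting
both `v` (with its incident edges) and `e` disconnects `H`. -/
def VECutPair {V : Type*} (H : SimpleGraph V) (v : V) (e : Sym2 V) : Prop :=
  e ∈ H.edgeSet ∧ ¬ ((H.deleteEdges {e}).induce {u | u ≠ v}).Connected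

/-- `{e, e'}` is a cut-pair of `H`: `e` and `e'` are distinct edges of `H` whose
deletion disconnects `H`. -/
def ECutPair {V : Type*} (H : SimpleGraph V) (e e' : Sym2 V) : Prop :=
  e ∈ H.edgeSet ∧ e' ∈ H.edgeSet ∧ e ≠ e' ∧ ¬ (H.deleteEdges {e, e'}).Connected

/-- An undirected graph is 2-edge-connected if it is connected and has no bridge. -/
def TwoEdgeConnected {W : Type*} (G : SimpleGraph W) : Prop :=
  G.Connected ∧ ∀ e ∈ G.edgeSet, ¬ G.IsBridge e

/-- An undirected graph is 2-vertex-connected if it has at least three vertices,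
is connected, and deleting any single vertex leaves it connected. -/
def TwoVertexConnected {W : Type*} (G : SimpleGraph W) : Prop :=
  3 ≤ Nat.card W ∧ G.Connected ∧ ∀ v : W, (G.induce {u | u ≠ v}).Connected

/-!
Write `p` for the parent of `c`, and `D v` for the set of descendants of `v`. An edge of `H` leaving
`D v` is either the tree edge from `v` to its parent or a back-edge to a proper ancestor of `v`.

Let `u` be a descendant of `c`. If `high u` lies strictly above `p`, every back-edge leaving `D u`
ends strictly above `p`, so `MSet u = MpSet c ∩ D u`, and `M(u) = M_p(c)` amounts to
`MpSet c ⊆ D u`. Once `p` and the tree edge of `u` are deleted, the only edges leaving `D c \ D u`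
are back-edges to proper ancestors of `p`. If all sources of such back-edges are in `D u`, then
`D c \ D u` is separated from the rest. Conversely, a back-edge from `D c \ D u` to a proper
ancestor of `p` and the one realizing `high u` connect the two ends of the deleted tree edge
through the root.
-/

namespace DFSTree

variable {V : Type*} {H : SimpleGraph V} {r : V} {T : DFSTree H r} {a b c u v w x y : V}

theorem eq_root_of_iterate_par_eq {k : ℕ} (hk : 0 < k) (hv : T.par^[k] v = v) : v = r := by
  obtain ⟨n, hn⟩ := T.reaches_root v
  have hperiodic : T.par^[k * n] v = v := Function.IsPeriodicPt.mul_const hv n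
  obtain ⟨m, hm⟩ := Nat.exists_eq_add_of_le' (Nat.le_mul_of_pos_left n hk)
  rwa [hm, Function.iterate_add_apply, hn, Function.iterate_fixed T.par_root, eq_comm] at hperiodic

theorem Anc.refl (T : DFSTree H r) (v : V) : T.Anc v v := ⟨0, rfl⟩

theorem Anc.trans (hab : T.Anc a b) (hbc : T.Anc b c) : T.Anc a c := by
  obtain ⟨n, rfl⟩ := hab
  obtain ⟨m, rfl⟩ := hbc
  exact ⟨n + m, Function.iterate_add_apply ..⟩

theorem root_anc (T : DFSTree H r) (v : V) : T.Anc r v := T.reaches_root v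

theorem par_anc (T : DFSTree H r) (v : V) : T.Anc (T.par v) v := ⟨1, rfl⟩

theorem Anc.antisymm (hab : T.Anc a b) (hba : T.Anc b a) : a = b := by
  obtain ⟨n, rfl⟩ := hab
  obtain ⟨m, hm⟩ := hba
  obtain rfl | hn := Nat.eq_zero_or_pos n
  · rfl
  · have hb : b = r :=
      T.eq_root_of_iterate_par_eq (Nat.add_pos_right m hn)
        ((Function.iterate_add_apply ..).trans hm)
    rw [hb, Function.iterate_fixed T.par_root]

theorem Anc.total (hav : T.Anc a v) (hbv : T.Anc b v) : T.Anc a b ∨ T.Anc b a := by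
  obtain ⟨n, rfl⟩ := hav
  obtain ⟨m, rfl⟩ := hbv
  obtain hnm | hmn := le_total n m
  · exact .inr ⟨m - n, by rw [← Function.iterate_add_apply, Nat.sub_add_cancel hnm]⟩
  · exact .inl ⟨n - m, by rw [← Function.iterate_add_apply, Nat.sub_add_cancel hmn]⟩

theorem PAnc.anc_par (h : T.PAnc a v) : T.Anc a (T.par v) := by
  obtain ⟨⟨_ | n, hn⟩, hne⟩ := h
  · exact absurd hn.symm hne
  · exact ⟨n, hn⟩

theorem PAnc.trans_anc (hab : T.PAnc a b) (hbc : T.Anc b c) : T.PAnc a c :=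
  ⟨hab.1.trans hbc, by rintro rfl; exact hab.2 (hab.1.antisymm hbc)⟩

theorem Anc.trans_pAnc (hab : T.Anc a b) (hbc : T.PAnc b c) : T.PAnc a c :=
  ⟨hab.trans hbc.1, by rintro rfl; exact hbc.2 (hbc.1.antisymm hab)⟩

theorem PAnc.not_anc (h : T.PAnc a b) : ¬ T.Anc b a := fun hba => h.2 (h.1.antisymm hba)

theorem PAnc.ne_root (h : T.PAnc a b) : b ≠ r := by
  rintro rfl
  exact h.not_anc (T.root_anc a)

theorem ne_root_of_par_ne_root (h : T.par v ≠ r) : v ≠ r := by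
  rintro rfl
  exact h T.par_root

theorem par_pAnc (hv : v ≠ r) : T.PAnc (T.par v) v := ⟨T.par_anc v, (T.par_adj v hv).ne'⟩

theorem Anc.ne_par (hvw : T.Anc v w) (hv : v ≠ r) : w ≠ T.par v :=
  ((T.par_pAnc hv).trans_anc hvw).2.symm

theorem eq_par_or_backEdge_of_adj_of_not_anc (hxy : H.Adj x y) (hvx : T.Anc v x)
    (hvy : ¬ T.Anc v y) : x = v ∧ y = T.par v ∨ T.PAnc y v ∧ T.BackEdge x y := by
  have hyx : T.Anc y x := (T.edge_anc x y hxy).resolve_right fun h => hvy (hvx.trans h)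
  have hyv : T.PAnc y v := by
    refine ⟨(hyx.total hvx).resolve_right hvy, ?_⟩
    rintro rfl
    exact hvy (.refl T y)
  by_cases hpar : T.par x = y
  · refine .inl ?_
    obtain rfl : v = x := by
      by_contra hne
      exact hvy (hpar ▸ PAnc.anc_par ⟨hvx, hne⟩)
    exact ⟨rfl, hpar.symm⟩
  · exact .inr ⟨hyv, hxy, hyx, hpar⟩

theorem IsHigh.mSet_nonempty {h : V} (hh : T.IsHigh u h) : (T.MSet u).Nonempty := by
  obtain ⟨hhu, ⟨x, hux, hxh⟩, -⟩ := hh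
  exact ⟨x, hux, h, hhu, hxh⟩

theorem IsHigh.mSet_subset_mpSet {h : V} (hh : T.IsHigh u h) (hcu : T.Anc c u)
    (hhc : T.PAnc h (T.par c)) : T.MSet u ⊆ T.MpSet c := by
  rintro x ⟨hux, y, hyu, hxy⟩
  exact ⟨hcu.trans hux, y, (hh.2.2 y hyu ⟨x, hux, hxy⟩).trans_pAnc hhc, hxy⟩

theorem mem_mSet_of_mem_mpSet (hu : T.Anc (T.par c) u) (hx : x ∈ T.MpSet c)
    (hux : T.Anc u x) : x ∈ T.MSet u := by
  obtain ⟨-, y, hyc, hxy⟩ := hx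
  exact ⟨hux, y, hyc.trans_anc hu, hxy⟩

theorem IsM.eq_of_mSet_eq_mpSet {m m' : V} (hm : T.IsM u m) (hm' : T.IsMp c m')
    (h : T.MSet u = T.MpSet c) : m = m' :=
  (hm'.2 m (h ▸ hm.1)).antisymm (hm.2 m' (h ▸ hm'.1))

theorem IsM.eq_iff_forall_mem_mpSet_anc {m m' h : V} (hm : T.IsM u m) (hm' : T.IsMp c m')
    (hh : T.IsHigh u h) (hcu : T.Anc c u) (hhc : T.PAnc h (T.par c)) :
    m = m' ↔ ∀ x ∈ T.MpSet c, T.Anc u x := by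
  constructor
  · rintro rfl x hx
    have hum : T.Anc u m := hm.2 u fun _ hx => hx.1
    exact hum.trans (hm'.1 x hx)
  · intro hanc
    refine hm.eq_of_mSet_eq_mpSet hm' ((hh.mSet_subset_mpSet hcu hhc).antisymm ?_)
    exact fun x hx => mem_mSet_of_mem_mpSet ((T.par_anc c).trans hcu) hx (hanc x hx)

/-- The graph `H - p(c) - (u, p(u))`, whose disconnectedness makes `{p(c), (u, p(u))}` a vertex-edge
cut-pair. -/
abbrev cutGraph (T : DFSTree H r) (c u : V) : SimpleGraph {x | x ≠ T.par c} :=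
  (H.deleteEdges {s(u, T.par u)}).induce {x | x ≠ T.par c}

theorem cutGraph_adj {a b : {x | x ≠ T.par c}} :
    (T.cutGraph c u).Adj a b ↔ H.Adj a b ∧ s(a.1, b.1) ≠ s(u, T.par u) := by
  simp only [SimpleGraph.induce_adj, SimpleGraph.deleteEdges_adj, Set.mem_singleton_iff, ne_eq]

theorem cutGraph_adj_par (hw : w ≠ r) (hwu : w ≠ u) (hwc : w ≠ T.par c) (hpwc : T.par w ≠ T.par c) :
    (T.cutGraph c u).Adj ⟨w, hwc⟩ ⟨T.par w, hpwc⟩ := by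
  refine cutGraph_adj.2 ⟨T.par_adj w hw, fun he => ?_⟩
  obtain ⟨h, -⟩ | ⟨hwpu, hpwu⟩ := Sym2.eq_iff.1 he
  · exact hwu h
  · exact hwu (Anc.antisymm (hwpu ▸ T.par_anc u) (hpwu ▸ T.par_anc w))

theorem Anc.cutGraph_reachable (hav : T.Anc a v)
    (hc : ∀ w, T.Anc a w → T.Anc w v → w ≠ T.par c)
    (hu : ∀ w, T.PAnc a w → T.Anc w v → w ≠ u) :
    (T.cutGraph c u).Reachable ⟨v, hc v hav (.refl T v)⟩ ⟨a, hc a (.refl T a) hav⟩ := by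
  obtain ⟨n, hn⟩ := hav
  induction n generalizing v with
  | zero => obtain rfl : v = a := hn; rfl
  | succ n ih =>
    by_cases hva : a = v
    · subst hva; rfl
    have hav : T.PAnc a v := ⟨⟨n + 1, hn⟩, hva⟩
    have hstep := cutGraph_adj_par hav.ne_root (hu v hav (.refl T v)) (hc v hav.1 (.refl T v))
      (hc _ hav.anc_par (T.par_anc v))
    exact hstep.reachable.trans <| ih (fun w haw hwv => hc w haw (hwv.trans (T.par_anc v)))
      (fun w haw hwv => hu w haw (hwv.trans (T.par_anc v))) hn

theorem PAnc.cutGraph_reachable_root (hy : T.PAnc y (T.par c)) (hu : T.Anc (T.par c) u) :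
    (T.cutGraph c u).Reachable ⟨y, hy.2⟩ ⟨r, hy.ne_root.symm⟩ := by
  have hpar : ∀ w, T.Anc w y → w ≠ T.par c := by
    rintro w hwy rfl
    exact hy.not_anc hwy
  have hne : ∀ w, T.Anc w y → w ≠ u := by
    rintro w hwy rfl
    exact hy.not_anc (hu.trans hwy)
  exact (T.root_anc y).cutGraph_reachable (fun w _ => hpar w) fun w _ => hne w

theorem cutGraph_adj_of_pAnc (hxy : H.Adj x y) (hx : x ≠ T.par c) (hy : T.PAnc y (T.par c))
    (hcu : T.PAnc c u) : (T.cutGraph c u).Adj ⟨x, hx⟩ ⟨y, hy.2⟩ := by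
  have hcy : ¬ T.Anc c y := (hy.trans_anc (T.par_anc c)).not_anc
  refine cutGraph_adj.2 ⟨hxy, fun he => ?_⟩
  obtain ⟨-, rfl⟩ | ⟨-, rfl⟩ := Sym2.eq_iff.1 he
  · exact hcy hcu.anc_par
  · exact hcy hcu.1

theorem cutGraph_reachable_root_of_adj (hca : T.Anc c a) (hax : T.Anc a x) (hxy : H.Adj x y)
    (hy : T.PAnc y (T.par c)) (hcu : T.PAnc c u) (hu : ∀ w, T.PAnc a w → T.Anc w x → w ≠ u) :
    (T.cutGraph c u).Reachable ⟨a, hca.ne_par (ne_root_of_par_ne_root hy.ne_root)⟩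
      ⟨r, hy.ne_root.symm⟩ := by
  have hc : c ≠ r := ne_root_of_par_ne_root hy.ne_root
  have hpath := hax.cutGraph_reachable (fun w haw _ => (hca.trans haw).ne_par hc) hu
  have hedge := cutGraph_adj_of_pAnc hxy ((hca.trans hax).ne_par hc) hy hcu
  have htop := hy.cutGraph_reachable_root ((T.par_anc c).trans hcu.1)
  exact hpath.symm.trans (hedge.reachable.trans htop)

theorem cutGraph_connected_of_reachable (hconn : (H.induce {x | x ≠ T.par c}).Connected)
    (hu : u ≠ T.par c) (hpu : T.par u ≠ T.par c)
    (h : (T.cutGraph c u).Reachable ⟨u, hu⟩ ⟨T.par u, hpu⟩) : (T.cutGraph c u).Connected := by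
  have hdelete : T.cutGraph c u = (H.induce {x | x ≠ T.par c}).deleteEdges
      {s(⟨u, hu⟩, ⟨T.par u, hpu⟩)} := by
    ext a b
    simp [Subtype.ext_iff]
  rw [hdelete] at h ⊢
  exact hconn.connected_delete_edge_of_not_isBridge fun hbridge =>
    SimpleGraph.isBridge_iff.1 hbridge h

theorem cutGraph_connected_of_mem_mpSet {z : V} (hconn : (H.induce {x | x ≠ T.par c}).Connected)
    (hcu : T.Anc c u) (hz : z ∈ T.MpSet c) (huz : T.Anc u z) (hx : x ∈ T.MpSet c)
    (hux : ¬ T.Anc u x) : (T.cutGraph c u).Connected := by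
  obtain ⟨-, h, hhc, hzh⟩ := hz
  obtain ⟨hcx, y, hyc, hxy⟩ := hx
  have hc : c ≠ r := ne_root_of_par_ne_root hhc.ne_root
  have hcu : T.PAnc c u := ⟨hcu, by rintro rfl; exact hux hcx⟩
  have hu_root := cutGraph_reachable_root_of_adj hcu.1 huz hzh.1 hhc hcu
    fun w huw _ => huw.2.symm
  have hc_root := cutGraph_reachable_root_of_adj (.refl T c) hcx hxy.1 hyc hcu
    fun w _ hwx hwu => hux (hwu ▸ hwx)
  have hpu_c := hcu.anc_par.cutGraph_reachable (u := u) (fun w hcw _ => hcw.ne_par hc)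
    fun w _ hwpu hwu => (par_pAnc hcu.ne_root).not_anc (hwu ▸ hwpu)
  exact cutGraph_connected_of_reachable hconn (hcu.1.ne_par hc) (hcu.anc_par.ne_par hc)
    (hu_root.trans (hpu_c.trans hc_root).symm)

theorem not_cutGraph_adj_of_forall_mem_mpSet_anc {h : V} {a b : {x | x ≠ T.par c}}
    (hh : T.IsHigh u h) (hhc : T.PAnc h (T.par c)) (hanc : ∀ x ∈ T.MpSet c, T.Anc u x)
    (hca : T.Anc c a) (hua : ¬ T.Anc u a) (hb : T.Anc c b → T.Anc u b) :
    ¬ (T.cutGraph c u).Adj a b := by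
  intro hab
  obtain ⟨hab, hne⟩ := cutGraph_adj.1 hab
  by_cases hcb : T.Anc c b
  · obtain ⟨hbu, hau⟩ | ⟨hau, hba⟩ :=
      eq_par_or_backEdge_of_adj_of_not_anc hab.symm (hb hcb) hua
    · exact hne (by rw [hbu, hau, Sym2.eq_swap])
    · have hah : T.Anc a h := hh.2.2 a hau ⟨b, hb hcb, hba⟩
      exact (hah.trans_pAnc (hhc.trans_anc (T.par_anc c))).not_anc hca
  · obtain ⟨-, hbc⟩ | ⟨hbc, hab⟩ := eq_par_or_backEdge_of_adj_of_not_anc hab hca hcb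
    · exact b.2 hbc
    · exact hua (hanc a ⟨hca, b, ⟨hbc.anc_par, b.2⟩, hab⟩)

theorem not_cutGraph_connected_of_forall_mem_mpSet_anc {h : V} (hcu : T.PAnc c u)
    (hh : T.IsHigh u h) (hhc : T.PAnc h (T.par c)) (hanc : ∀ x ∈ T.MpSet c, T.Anc u x) :
    ¬ (T.cutGraph c u).Connected := by
  intro hconn
  have hc : c ≠ r := ne_root_of_par_ne_root hhc.ne_root
  obtain ⟨walk⟩ := hconn.preconnected ⟨c, (Anc.refl T c).ne_par hc⟩ ⟨u, hcu.1.ne_par hc⟩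
  obtain ⟨d, -, ⟨hca, hua⟩, hb⟩ := walk.exists_boundary_dart {z | T.Anc c z ∧ ¬ T.Anc u z}
    ⟨.refl T c, hcu.not_anc⟩ fun hu => hu.2 (.refl T u)
  exact not_cutGraph_adj_of_forall_mem_mpSet_anc hh hhc hanc hca hua
    (fun hcb => not_not.1 fun hub => hb ⟨hcb, hub⟩) d.adj

end DFSTree

theorem stmt_14_general {V : Type*} (H : SimpleGraph V) (r : V) (T : DFSTree H r)
    (c u hgu mu mpc : V)
    (hmu : T.IsM u mu) (hmpc : T.IsMp c mpc) (hhgu : T.IsHigh u hgu) :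
    ((H.induce {x | x ≠ T.par c}).Connected → VECutPair H (T.par c) s(u, T.par u) →
      T.Anc c u → T.PAnc hgu (T.par c) → mu = mpc) ∧
    (T.PAnc c u → mu = mpc → T.PAnc hgu (T.par c) →
      VECutPair H (T.par c) s(u, T.par u)) := by
  constructor
  · intro hconn hcut hcu hgc
    refine (hmu.eq_iff_forall_mem_mpSet_anc hmpc hhgu hcu hgc).2 fun x hx => ?_
    by_contra hux
    obtain ⟨z, hz⟩ := hhgu.mSet_nonempty
    have hzc : z ∈ T.MpSet c := hhgu.mSet_subset_mpSet hcu hgc hz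
    exact hcut.2 (DFSTree.cutGraph_connected_of_mem_mpSet hconn hcu hzc hz.1 hx hux)
  · intro hcu hM hgc
    have hanc := (hmu.eq_iff_forall_mem_mpSet_anc hmpc hhgu hcu.1 hgc).1 hM
    exact ⟨T.par_adj u hcu.ne_root,
      DFSTree.not_cutGraph_connected_of_forall_mem_mpSet_anc hcu hhgu hgc hanc⟩

theorem stmt_14 {V : Type*} [Fintype V] (H : SimpleGraph V) (r : V)
    (T : DFSTree H r) (hH : TwoVertexConnected H) (c u hgu mu mpc : V)
    (hc : c ≠ r) (hu : u ≠ r)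
    (hmu : T.IsM u mu) (hmpc : T.IsMp c mpc) (hhgu : T.IsHigh u hgu) :
    (VECutPair H (T.par c) s(u, T.par u) → T.Anc c u → T.PAnc hgu (T.par c) →
      mu = mpc) ∧
    (T.PAnc c u → mu = mpc → T.PAnc hgu (T.par c) →
      VECutPair H (T.par c) s(u, T.par u)) :=
  (stmt_14_general H r T c u hgu mu mpc hmu hmpc hhgu).imp_left fun h => h (hH.2.2 (T.par c))
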